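/- Let G ≠ K_n be a graph on n vertices with maximum degree Δ, and let 1/(Δ+1) ≤ α < 1. Then for every integer k with 2 ≤ k ≤ n, S_k(A_α(G)) ≤ (αΔn/2)·(1 + √k). -/

import Mathlib

open Matrix Finset Real

/-- The `A_α`-matrix of a graph: `A_α(G) = α·D(G) + (1−α)·A(G)`. -/
noncomputable def Aalpha {n : ℕ} (α : ℝ) (G : SimpleGraph (Fin n)) [DecidableRel G.Adj] :
    Matrix (Fin n) (Fin n) ℝ :=
  α • Matrix.diagonal (fun i => (G.degree i : ℝ)) + (1 - α) • G.adjMatrix ℝ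

/-- The sum of the `k` largest eigenvalues of a real symmetric matrix, expressed as
the supremum over all `k`-subsets of indices of the corresponding eigenvalue sums. -/
noncomputable def Sk {n : ℕ} (M : Matrix (Fin n) (Fin n) ℝ) (k : ℕ) : ℝ :=
  if h : M.IsHermitian then
    sSup {x : ℝ | ∃ s : Finset (Fin n), s.card = k ∧ x = ∑ i ∈ s, h.eigenvalues i}
  else 0

lemma aux_key {n : ℕ} (M : Matrix (Fin n) (Fin n) ℝ) (c : ℝ) (hc : 0 ≤ c)
    (h0 : ∀ a b, 0 ≤ M a b) (h1 : ∀ a b, M a b ≤ c)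
    (v : Fin n → Fin n → ℝ) (l : Fin n → ℝ)
    (ho : ∀ i j, ∑ a, v i a * v j a = if i = j then 1 else 0)
    (hM : ∀ i a, ∑ b, M a b * v i b = l i * v i a) (s : Finset (Fin n)) :
    ∑ i ∈ s, l i ≤ c * n / 2 * (1 + √(s.card : ℝ)) := by
  set P : Fin n → Fin n → ℝ := fun a b => ∑ i ∈ s, v i a * v i b with hP
  set t : Fin n → ℝ := fun i => ∑ a, v i a with ht
  -- trace formula
  have e1 : ∑ i ∈ s, l i = ∑ a, ∑ b, M a b * P a b := by
    have : ∀ i ∈ s, l i = ∑ a, ∑ b, M a b * (v i a * v i b) := by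
      intro i _
      calc l i = l i * ∑ a, v i a * v i a := by rw [ho]; simp
        _ = ∑ a, v i a * (l i * v i a) := by
            rw [Finset.mul_sum]; exact Finset.sum_congr rfl fun a _ => by ring
        _ = _ := by
            refine Finset.sum_congr rfl fun a _ => ?_
            rw [← hM, Finset.mul_sum]; exact Finset.sum_congr rfl fun b _ => by ring
    rw [Finset.sum_congr rfl this, Finset.sum_comm]
    refine Finset.sum_congr rfl fun a _ => ?_
    rw [Finset.sum_comm]
    exact Finset.sum_congr rfl fun b _ => by rw [hP, Finset.mul_sum]
  have e2 : ∑ a, ∑ b, P a b = ∑ i ∈ s, t i ^ 2 := by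
    simp only [hP, ht, sq, Finset.sum_mul_sum]
    rw [Finset.sum_comm (s := s)]
    exact Finset.sum_congr rfl fun a _ => Finset.sum_comm
  have e3 : ∑ a, ∑ b, P a b ^ 2 = (s.card : ℝ) := by
    have : ∀ a b, P a b ^ 2 = ∑ i ∈ s, ∑ j ∈ s, (v i a * v j a) * (v i b * v j b) := by
      intro a b
      simp only [hP, sq, Finset.sum_mul_sum]
      exact Finset.sum_congr rfl fun i _ => Finset.sum_congr rfl fun j _ => by ring
    calc ∑ a, ∑ b, P a b ^ 2
        = ∑ i ∈ s, ∑ j ∈ s, (∑ a, v i a * v j a) * (∑ b, v i b * v j b) := by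
          simp only [this, Finset.sum_mul_sum]
          calc _ = ∑ a, ∑ i ∈ s, ∑ j ∈ s, ∑ b, (v i a * v j a) * (v i b * v j b) := by
                refine Finset.sum_congr rfl fun a _ => ?_
                rw [Finset.sum_comm]
                exact Finset.sum_congr rfl fun i _ => Finset.sum_comm
            _ = _ := by
                rw [Finset.sum_comm]
                exact Finset.sum_congr rfl fun i _ => Finset.sum_comm
      _ = _ := by simp [ho]
  have e4 : ∑ i ∈ s, t i ^ 2 ≤ n := by
    have hx : ∑ a, ∑ i ∈ s, t i * v i a = ∑ i ∈ s, t i ^ 2 := by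
      rw [Finset.sum_comm]
      exact Finset.sum_congr rfl fun i _ => by rw [← Finset.mul_sum, sq]
    have hy : ∑ a, (∑ i ∈ s, t i * v i a) ^ 2 = ∑ i ∈ s, t i ^ 2 := by
      calc _ = ∑ i ∈ s, ∑ j ∈ s, t i * t j * ∑ a, v i a * v j a := by
            simp only [sq, Finset.sum_mul_sum]
            simp only [Finset.mul_sum]
            rw [Finset.sum_comm]
            refine Finset.sum_congr rfl fun i _ => ?_
            rw [Finset.sum_comm]
            exact Finset.sum_congr rfl fun j _ => Finset.sum_congr rfl fun a _ => by ring
        _ = _ := by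
            refine Finset.sum_congr rfl fun i hi => ?_
            simp [ho, hi, sq]
    have hz : 0 ≤ ∑ a, (1 - ∑ i ∈ s, t i * v i a) ^ 2 :=
      Finset.sum_nonneg fun a _ => sq_nonneg _
    have : ∑ a, (1 - ∑ i ∈ s, t i * v i a) ^ 2
        = n - 2 * ∑ a, ∑ i ∈ s, t i * v i a + ∑ a, (∑ i ∈ s, t i * v i a) ^ 2 := by
      simp only [sub_sq, Finset.sum_add_distrib, Finset.sum_sub_distrib, Finset.mul_sum]
      simp
    rw [this, hx, hy] at hz
    linarith
  have e5 : ∑ a, ∑ b, (M a b - c / 2) * P a b ≤ c * n / 2 * √(s.card : ℝ) := by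
    have cs := Finset.sum_mul_sq_le_sq_mul_sq (Finset.univ : Finset (Fin n × Fin n))
      (fun p => M p.1 p.2 - c / 2) (fun p => P p.1 p.2)
    simp only [Fintype.sum_prod_type] at cs
    rw [e3] at cs
    have hb : ∑ a, ∑ b, (M a b - c / 2) ^ 2 ≤ (c * n / 2) ^ 2 := by
      calc _ ≤ ∑ a : Fin n, ∑ b : Fin n, (c / 2) ^ 2 := by
            refine Finset.sum_le_sum fun a _ => Finset.sum_le_sum fun b _ => ?_
            nlinarith [h0 a b, h1 a b, mul_nonneg (h0 a b) (sub_nonneg.2 (h1 a b))]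
        _ = _ := by simp; ring
    refine (abs_le_of_sq_le_sq' ?_ (by positivity)).2
    rw [mul_pow, Real.sq_sqrt (by positivity)]
    exact cs.trans (mul_le_mul_of_nonneg_right hb (by positivity))
  have e6 : ∑ a, ∑ b, M a b * P a b
      = ∑ a, ∑ b, (M a b - c / 2) * P a b + c / 2 * ∑ a, ∑ b, P a b := by
    simp only [Finset.mul_sum, ← Finset.sum_add_distrib]
    exact Finset.sum_congr rfl fun a _ => Finset.sum_congr rfl fun b _ => by ring
  rw [e1, e6, e2]
  have := mul_le_mul_of_nonneg_left e4 (show 0 ≤ c / 2 by positivity)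
  linarith

theorem stmt2 {n : ℕ} (G : SimpleGraph (Fin n)) [DecidableRel G.Adj] (hG : G ≠ ⊤)
    (α : ℝ) (hα0 : 1 / ((G.maxDegree : ℝ) + 1) ≤ α) (hα1 : α < 1)
    (k : ℕ) (hk2 : 2 ≤ k) (hkn : k ≤ n) :
    Sk (Aalpha α G) k ≤ α * G.maxDegree * n / 2 * (1 + Real.sqrt k) := by
  have hα : 0 ≤ α := le_trans (by positivity) hα0
  have hd : 1 ≤ α * (G.maxDegree + 1) := by
    rwa [div_le_iff₀ (by positivity)] at hα0
  have hnn : 0 ≤ α * G.maxDegree := by positivity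
  unfold Sk
  split_ifs with h
  · apply Real.sSup_le _ (by positivity)
    rintro x ⟨s, rfl, rfl⟩
    apply aux_key (Aalpha α G) (α * G.maxDegree) hnn _ _
      (fun i a => h.eigenvectorBasis i a) _ _ _ s
    · intro a b
      by_cases hab : a = b
      · subst hab
        simp [Aalpha]; positivity
      · by_cases hh : G.Adj a b <;> simp [Aalpha, hab, hh, SimpleGraph.adjMatrix_apply]
        linarith
    · intro a b
      by_cases hab : a = b
      · subst hab
        simp [Aalpha]
        exact mul_le_mul_of_nonneg_left (by exact_mod_cast G.degree_le_maxDegree a) hα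
      · by_cases hh : G.Adj a b <;> simp [Aalpha, hab, hh, SimpleGraph.adjMatrix_apply]
        · linarith
        · exact hnn
    · intro i j
      have := orthonormal_iff_ite.1 h.eigenvectorBasis.orthonormal i j
      rw [← this, PiLp.inner_apply]
      exact Finset.sum_congr rfl fun a _ => by simp [mul_comm]
    · intro i a
      have := congrFun (h.mulVec_eigenvectorBasis i) a
      simpa [Matrix.mulVec, dotProduct] using this
  · positivity
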